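/- arXiv:0704.1730 — 9 statements merged into one kernel-verified Lean document; each statement's English description precedes it below -/
import Mathlib

section
/- Let X be a finite nonempty set and let τ₁, τ₂, τ₃ be permutations of X (composed left to right, xτ denoting the image of x) such that: (Q1) for all r < s in {1,2,3}, every cycle ρ of τ_r and every cycle μ of τ_s satisfy |mov(ρ) ∩ mov(μ)| ≤ 1; (Q2) each τ_i has no fixed points; and (Q3) τ₁τ₂τ₃ = 1. For i ∈ {1,2,3} let 𝒜_i be the set of cycles of τ_i, and define S° = {(ρ₁,ρ₂,ρ₃) ∈ 𝒜₁×𝒜₂×𝒜₃ : there exists x ∈ X with x ∈ mov(ρ₁) ∩ mov(ρ₂) ∩ mov(ρ₃)} and S⋆ = {(ρ₁,ρ₂,ρ₃) ∈ 𝒜₁×𝒜₂×𝒜₃ : there exist pairwise distinct x, x', x'' ∈ X with xρ₁ = x', x'ρ₂ = x'', x''ρ₃ = x}. Then (S°, S⋆) is a latin bitrade of size |X|, the number of distinct first coordinates appearing in S° is |𝒜₁|, the number of distinct second coordinates is |𝒜₂|, and the number of distinct third coordinates is |𝒜₃|. -/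
/-!
For `x : X` let `cᵢ x` be the cycle of `τᵢ` through `x`. As no `τᵢ` has fixed points, `S°` is the
set of triples `(c₁ x, c₂ x, c₃ x)` (`scirc_eq_range`), and, since `τ₁τ₂τ₃ = 1`, `S⋆` is the set
of triples `(c₁ x, c₂ x', c₃ x'')` with `x' = xτ₁`, `x'' = x'τ₂`, `x = x''τ₃` (`sstar_eq_range`).

By (Q1) a point is determined by any two of its three cycles (`eq_of_cycleOf_eq`). On the other
hand `c₁ x = c₁ x'`, `c₂ x' = c₂ x''` and `c₃ x'' = c₃ x`, so the triple of `S⋆` given by `x`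
shares its first two coordinates with the triple of `S°` at `x'`, its first and third with the one
at `x`, and its last two with the one at `x''`. All the bitrade axioms follow from these facts; in
particular a common triple of `S°` and `S⋆` would force `x = x'`, a fixed point of `τ₁`.
-/

section LatinDefs

variable {A₁ A₂ A₃ : Type*}

/-- A partial latin square: two triples agreeing in at least two coordinates are equal
(i.e. two distinct triples agree in at most one coordinate). -/
def IsPLS (T : Set (A₁ × A₂ × A₃)) : Prop :=
  ∀ t ∈ T, ∀ t' ∈ T,
    ((t.1 = t'.1 ∧ t.2.1 = t'.2.1) → t = t') ∧
    ((t.1 = t'.1 ∧ t.2.2 = t'.2.2) → t = t') ∧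
    ((t.2.1 = t'.2.1 ∧ t.2.2 = t'.2.2) → t = t')

/-- Conditions (R2)/(R3): for each triple of `T` and each pair of coordinates there is a
unique triple of `T'` agreeing with it in those two coordinates. -/
def BitradeCond (T T' : Set (A₁ × A₂ × A₃)) : Prop :=
  ∀ t ∈ T,
    (∃! t', t' ∈ T' ∧ t'.1 = t.1 ∧ t'.2.1 = t.2.1) ∧
    (∃! t', t' ∈ T' ∧ t'.1 = t.1 ∧ t'.2.2 = t.2.2) ∧
    (∃! t', t' ∈ T' ∧ t'.2.1 = t.2.1 ∧ t'.2.2 = t.2.2)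

/-- A latin bitrade: a pair of disjoint nonempty partial latin squares satisfying
(R1), (R2), (R3). -/
def IsBitrade (T T' : Set (A₁ × A₂ × A₃)) : Prop :=
  T.Nonempty ∧ T'.Nonempty ∧ IsPLS T ∧ IsPLS T' ∧ Disjoint T T' ∧
  BitradeCond T T' ∧ BitradeCond T' T

/-- A latin bitrade is primary if its only sub-bitrade is itself. -/
def IsPrimary (T T' : Set (A₁ × A₂ × A₃)) : Prop :=
  ∀ U U' : Set (A₁ × A₂ × A₃), IsBitrade U U' → U ⊆ T → U' ⊆ T' → U = T ∧ U' = T'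

/-- A latin trade `T` is minimal if any latin trade contained in it equals it. -/
def IsMinimalTrade (T : Set (A₁ × A₂ × A₃)) : Prop :=
  ∀ U U' : Set (A₁ × A₂ × A₃), IsBitrade U U' → U ⊆ T → U = T

/-- Thinness: if `i ∘ j = i' ∘ j'` with `i ≠ i'`, `j ≠ j'`, then `i ⋆ j'` is undefined or
equals `i ∘ j`. -/
def IsThin (T T' : Set (A₁ × A₂ × A₃)) : Prop :=
  ∀ i i' j j' k, (i, j, k) ∈ T → (i', j', k) ∈ T → i ≠ i' → j ≠ j' →
    ∀ k', (i, j', k') ∈ T' → k' = k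

/-- Orthogonality: if `i ∘ j = i' ∘ j'` with `i ≠ i'`, `j ≠ j'`, and both `i ⋆ j`,
`i' ⋆ j'` are defined, then `i ⋆ j ≠ i' ⋆ j'`. -/
def IsOrthogonal (T T' : Set (A₁ × A₂ × A₃)) : Prop :=
  ∀ i i' j j' k, (i, j, k) ∈ T → (i', j', k) ∈ T → i ≠ i' → j ≠ j' →
    ∀ k₁ k₂, (i, j, k₁) ∈ T' → (i', j', k₂) ∈ T' → k₁ ≠ k₂

/-- `k`-homogeneity: every occurring row, column and symbol appears in exactly `k` triples. -/
def IsHomogeneous (T : Set (A₁ × A₂ × A₃)) (k : ℕ) : Prop :=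
  (∀ i, (∃ t ∈ T, t.1 = i) → {t ∈ T | t.1 = i}.ncard = k) ∧
  (∀ j, (∃ t ∈ T, t.2.1 = j) → {t ∈ T | t.2.1 = j}.ncard = k) ∧
  (∀ s, (∃ t ∈ T, t.2.2 = s) → {t ∈ T | t.2.2 = s}.ncard = k)

end LatinDefs

/-- Condition (Q1) for a pair of permutations: any cycle of the first and any cycle of
the second move at most one common point. -/
def CyclesMeetPairwise {X : Type*} [Fintype X] [DecidableEq X] (σ τ : Equiv.Perm X) : Prop :=
  ∀ ρ ∈ σ.cycleFactorsFinset, ∀ μ ∈ τ.cycleFactorsFinset,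
    (ρ.support ∩ μ.support).card ≤ 1

/-- `S° = {(ρ₁,ρ₂,ρ₃) : ρᵢ a cycle of τᵢ, with a common moved point}`. -/
def Scirc {X : Type*} [Fintype X] [DecidableEq X] (τ₁ τ₂ τ₃ : Equiv.Perm X) :
    Set (Equiv.Perm X × Equiv.Perm X × Equiv.Perm X) :=
  {t | t.1 ∈ τ₁.cycleFactorsFinset ∧ t.2.1 ∈ τ₂.cycleFactorsFinset ∧
       t.2.2 ∈ τ₃.cycleFactorsFinset ∧
       ∃ x : X, x ∈ t.1.support ∧ x ∈ t.2.1.support ∧ x ∈ t.2.2.support}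

/-- `S⋆ = {(ρ₁,ρ₂,ρ₃) : ρᵢ a cycle of τᵢ, and there are pairwise distinct x, x', x''
with xρ₁ = x', x'ρ₂ = x'', x''ρ₃ = x}`. -/
def Sstar {X : Type*} [Fintype X] [DecidableEq X] (τ₁ τ₂ τ₃ : Equiv.Perm X) :
    Set (Equiv.Perm X × Equiv.Perm X × Equiv.Perm X) :=
  {t | t.1 ∈ τ₁.cycleFactorsFinset ∧ t.2.1 ∈ τ₂.cycleFactorsFinset ∧
       t.2.2 ∈ τ₃.cycleFactorsFinset ∧
       ∃ x x' x'' : X, x ≠ x' ∧ x' ≠ x'' ∧ x ≠ x'' ∧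
         t.1 x = x' ∧ t.2.1 x' = x'' ∧ t.2.2 x'' = x}

open Equiv.Perm in
lemma mem_cycleFactors_and_moves_iff {X : Type*} [Fintype X] [DecidableEq X]
    (τ ρ : Equiv.Perm X) (hτ : ∀ x, τ x ≠ x) (x : X) :
    (ρ ∈ τ.cycleFactorsFinset ∧ x ∈ ρ.support) ↔ ρ = τ.cycleOf x := by
  constructor
  · rintro ⟨h, hx⟩
    exact cycle_is_cycleOf hx h
  · rintro rfl
    refine ⟨cycleOf_mem_cycleFactorsFinset_iff.2 (mem_support.2 (hτ x)), ?_⟩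
    rw [mem_support, cycleOf_apply_self]
    exact hτ x

/-- Under (Q1), a point is determined by its cycles under the two permutations. -/
lemma eq_of_cycleOf_eq {X : Type*} [Fintype X] [DecidableEq X] {σ τ : Equiv.Perm X}
    (hσ : ∀ x, σ x ≠ x) (hτ : ∀ x, τ x ≠ x) (h : CyclesMeetPairwise σ τ) {x y : X}
    (h₁ : σ.cycleOf x = σ.cycleOf y) (h₂ : τ.cycleOf x = τ.cycleOf y) : x = y := by
  obtain ⟨hσm, hσx⟩ := (mem_cycleFactors_and_moves_iff σ _ hσ x).2 rfl
  obtain ⟨hτm, hτx⟩ := (mem_cycleFactors_and_moves_iff τ _ hτ x).2 rfl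
  obtain ⟨-, hσy⟩ := (mem_cycleFactors_and_moves_iff σ _ hσ y).2 h₁
  obtain ⟨-, hτy⟩ := (mem_cycleFactors_and_moves_iff τ _ hτ y).2 h₂
  exact Finset.card_le_one.1 (h _ hσm _ hτm) x (Finset.mem_inter.2 ⟨hσx, hτx⟩) y
    (Finset.mem_inter.2 ⟨hσy, hτy⟩)

lemma cycleOf_apply_eq_cycleOf {X : Type*} [Fintype X] [DecidableEq X] (τ : Equiv.Perm X)
    (x : X) : τ.cycleOf (τ x) = τ.cycleOf x :=
  (Equiv.Perm.SameCycle.cycleOf_eq (Equiv.Perm.sameCycle_apply_left.2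
    (Equiv.Perm.SameCycle.refl τ x)))

lemma scirc_eq_range {X : Type*} [Fintype X] [DecidableEq X] (τ₁ τ₂ τ₃ : Equiv.Perm X)
    (hQ2 : ∀ x : X, τ₁ x ≠ x ∧ τ₂ x ≠ x ∧ τ₃ x ≠ x) :
    Scirc τ₁ τ₂ τ₃ = Set.range fun x => (τ₁.cycleOf x, τ₂.cycleOf x, τ₃.cycleOf x) := by
  have k₁ := fun ρ => mem_cycleFactors_and_moves_iff τ₁ ρ fun x => (hQ2 x).1
  have k₂ := fun ρ => mem_cycleFactors_and_moves_iff τ₂ ρ fun x => (hQ2 x).2.1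
  have k₃ := fun ρ => mem_cycleFactors_and_moves_iff τ₃ ρ fun x => (hQ2 x).2.2
  ext ⟨a, b, c⟩
  simp only [Scirc, Set.mem_setOf_eq, Set.mem_range, Prod.mk.injEq]
  constructor
  · rintro ⟨ha, hb, hc, x, xa, xb, xc⟩
    exact ⟨x, ((k₁ a x).1 ⟨ha, xa⟩).symm, ((k₂ b x).1 ⟨hb, xb⟩).symm, ((k₃ c x).1 ⟨hc, xc⟩).symm⟩
  · rintro ⟨x, ha, hb, hc⟩
    obtain ⟨ha, xa⟩ := (k₁ a x).2 ha.symm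
    obtain ⟨hb, xb⟩ := (k₂ b x).2 hb.symm
    obtain ⟨hc, xc⟩ := (k₃ c x).2 hc.symm
    exact ⟨ha, hb, hc, x, xa, xb, xc⟩

lemma sstar_eq_range {X : Type*} [Fintype X] [DecidableEq X] (τ₁ τ₂ τ₃ : Equiv.Perm X)
    (hQ2 : ∀ x : X, τ₁ x ≠ x ∧ τ₂ x ≠ x ∧ τ₃ x ≠ x)
    (hQ3 : ∀ x : X, τ₃ (τ₂ (τ₁ x)) = x) :
    Sstar τ₁ τ₂ τ₃ = Set.range fun x =>
      (τ₁.cycleOf x, τ₂.cycleOf (τ₁ x), τ₃.cycleOf (τ₂ (τ₁ x))) := by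
  have k₁ := fun ρ => mem_cycleFactors_and_moves_iff τ₁ ρ fun x => (hQ2 x).1
  have k₂ := fun ρ => mem_cycleFactors_and_moves_iff τ₂ ρ fun x => (hQ2 x).2.1
  have k₃ := fun ρ => mem_cycleFactors_and_moves_iff τ₃ ρ fun x => (hQ2 x).2.2
  ext ⟨a, b, c⟩
  simp only [Sstar, Set.mem_setOf_eq, Set.mem_range, Prod.mk.injEq]
  constructor
  · rintro ⟨ha, hb, hc, x, x', x'', h₁, h₂, h₃, e₁, e₂, e₃⟩
    -- Each of the three points is moved by the cycle applied to it, which is thus its cycle.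
    have ea := (k₁ a x).1 ⟨ha, Equiv.Perm.mem_support.2 (by rw [e₁]; exact h₁.symm)⟩
    have eb := (k₂ b x').1 ⟨hb, Equiv.Perm.mem_support.2 (by rw [e₂]; exact h₂.symm)⟩
    have ec := (k₃ c x'').1 ⟨hc, Equiv.Perm.mem_support.2 (by rw [e₃]; exact h₃)⟩
    rw [ea, Equiv.Perm.cycleOf_apply_self] at e₁
    rw [eb, Equiv.Perm.cycleOf_apply_self] at e₂
    exact ⟨x, ea.symm, by rw [e₁, eb], by rw [e₁, e₂, ec]⟩
  · rintro ⟨x, rfl, rfl, rfl⟩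
    refine ⟨((k₁ _ _).2 rfl).1, ((k₂ _ _).2 rfl).1, ((k₃ _ _).2 rfl).1, x, τ₁ x, τ₂ (τ₁ x),
      (hQ2 x).1.symm, (hQ2 _).2.1.symm, ?_, ?_, ?_, ?_⟩
    · have h := (hQ2 (τ₂ (τ₁ x))).2.2
      rwa [hQ3 x] at h
    · exact Equiv.Perm.cycleOf_apply_self _ _
    · exact Equiv.Perm.cycleOf_apply_self _ _
    · rw [Equiv.Perm.cycleOf_apply_self, hQ3]

lemma range_cycleOf {X : Type*} [Fintype X] [DecidableEq X] (τ : Equiv.Perm X)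
    (hτ : ∀ x, τ x ≠ x) : Set.range τ.cycleOf = (τ.cycleFactorsFinset : Set (Equiv.Perm X)) := by
  ext ρ
  constructor
  · rintro ⟨x, rfl⟩
    exact ((mem_cycleFactors_and_moves_iff τ _ hτ x).2 rfl).1
  · intro h
    obtain ⟨x, hx⟩ := (Equiv.Perm.mem_cycleFactorsFinset_iff.1 h).1.nonempty_support
    exact ⟨x, ((mem_cycleFactors_and_moves_iff τ _ hτ x).1 ⟨h, hx⟩).symm⟩

/-- In `BitradeCond` only existence has to be checked when the target is a partial latin
square. -/
lemma bitradeCond_of_isPLS {A₁ A₂ A₃ : Type*} {T T' : Set (A₁ × A₂ × A₃)} (hT' : IsPLS T')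
    (h : ∀ t ∈ T, (∃ t' ∈ T', t'.1 = t.1 ∧ t'.2.1 = t.2.1) ∧
      (∃ t' ∈ T', t'.1 = t.1 ∧ t'.2.2 = t.2.2) ∧
      (∃ t' ∈ T', t'.2.1 = t.2.1 ∧ t'.2.2 = t.2.2)) : BitradeCond T T' := by
  intro t ht
  obtain ⟨⟨u, hu, u₁, u₂⟩, ⟨v, hv, v₁, v₂⟩, ⟨w, hw, w₁, w₂⟩⟩ := h t ht
  exact ⟨⟨u, ⟨hu, u₁, u₂⟩, fun s hs => (hT' s hs.1 u hu).1 ⟨hs.2.1.trans u₁.symm,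
      hs.2.2.trans u₂.symm⟩⟩,
    ⟨v, ⟨hv, v₁, v₂⟩, fun s hs => (hT' s hs.1 v hv).2.1 ⟨hs.2.1.trans v₁.symm,
      hs.2.2.trans v₂.symm⟩⟩,
    ⟨w, ⟨hw, w₁, w₂⟩, fun s hs => (hT' s hs.1 w hw).2.2 ⟨hs.2.1.trans w₁.symm,
      hs.2.2.trans w₂.symm⟩⟩⟩

/-- Theorem (Drápal): permutations `τ₁, τ₂, τ₃` of a finite nonempty set `X` satisfying
(Q1), (Q2), (Q3) (composition left to right) yield a latin bitrade `(S°, S⋆)` of size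
`|X|`, whose numbers of distinct rows, columns and symbols are the numbers of cycles of
`τ₁`, `τ₂`, `τ₃` respectively. -/
theorem statement0 {X : Type*} [Fintype X] [DecidableEq X] [Nonempty X]
    (τ₁ τ₂ τ₃ : Equiv.Perm X)
    (hQ1a : CyclesMeetPairwise τ₁ τ₂)
    (hQ1b : CyclesMeetPairwise τ₁ τ₃)
    (hQ1c : CyclesMeetPairwise τ₂ τ₃)
    (hQ2 : ∀ x : X, τ₁ x ≠ x ∧ τ₂ x ≠ x ∧ τ₃ x ≠ x)
    (hQ3 : ∀ x : X, τ₃ (τ₂ (τ₁ x)) = x) :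
    IsBitrade (Scirc τ₁ τ₂ τ₃) (Sstar τ₁ τ₂ τ₃) ∧
    (Scirc τ₁ τ₂ τ₃).ncard = Fintype.card X ∧
    (Prod.fst '' Scirc τ₁ τ₂ τ₃).ncard = τ₁.cycleFactorsFinset.card ∧
    ((fun t => t.2.1) '' Scirc τ₁ τ₂ τ₃).ncard = τ₂.cycleFactorsFinset.card ∧
    ((fun t => t.2.2) '' Scirc τ₁ τ₂ τ₃).ncard = τ₃.cycleFactorsFinset.card := by
  have i₁₂ := fun x y => eq_of_cycleOf_eq (fun x => (hQ2 x).1) (fun x => (hQ2 x).2.1) hQ1a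
    (x := x) (y := y)
  have i₁₃ := fun x y => eq_of_cycleOf_eq (fun x => (hQ2 x).1) (fun x => (hQ2 x).2.2) hQ1b
    (x := x) (y := y)
  have i₂₃ := fun x y => eq_of_cycleOf_eq (fun x => (hQ2 x).2.1) (fun x => (hQ2 x).2.2) hQ1c
    (x := x) (y := y)
  have s₁ := cycleOf_apply_eq_cycleOf τ₁
  have s₂ := cycleOf_apply_eq_cycleOf τ₂
  have s₃ : ∀ x, τ₃.cycleOf (τ₂ (τ₁ x)) = τ₃.cycleOf x := fun x => by
    rw [← cycleOf_apply_eq_cycleOf τ₃ (τ₂ (τ₁ x)), hQ3]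
  have hc := scirc_eq_range τ₁ τ₂ τ₃ hQ2
  have hs := sstar_eq_range τ₁ τ₂ τ₃ hQ2 hQ3
  have hcP : IsPLS (Scirc τ₁ τ₂ τ₃) := by
    rw [hc]
    rintro _ ⟨x, rfl⟩ _ ⟨y, rfl⟩
    refine ⟨fun h => ?_, fun h => ?_, fun h => ?_⟩
    · rw [i₁₂ x y h.1 h.2]
    · rw [i₁₃ x y h.1 h.2]
    · rw [i₂₃ x y h.1 h.2]
  have hsP : IsPLS (Sstar τ₁ τ₂ τ₃) := by
    rw [hs]
    rintro _ ⟨x, rfl⟩ _ ⟨y, rfl⟩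
    refine ⟨fun h => ?_, fun h => ?_, fun h => ?_⟩
    · have e := i₁₂ (τ₁ x) (τ₁ y) ((s₁ x).trans (h.1.trans (s₁ y).symm)) h.2
      rw [τ₁.injective e]
    · rw [i₁₃ x y h.1 ((s₃ x).symm.trans (h.2.trans (s₃ y)))]
    · have e := i₂₃ (τ₂ (τ₁ x)) (τ₂ (τ₁ y)) ((s₂ _).trans (h.1.trans (s₂ _).symm)) h.2
      rw [τ₁.injective (τ₂.injective e)]
  refine ⟨⟨?_, ?_, hcP, hsP, ?_, bitradeCond_of_isPLS hsP ?_, bitradeCond_of_isPLS hcP ?_⟩,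
    ?_, ?_, ?_, ?_⟩
  · rw [hc]; exact Set.range_nonempty _
  · rw [hs]; exact Set.range_nonempty _
  · rw [hc, hs, Set.disjoint_left]
    rintro _ ⟨x, rfl⟩ ⟨y, hy⟩
    simp only [Prod.mk.injEq] at hy
    obtain ⟨h₁, h₂, h₃⟩ := hy
    have e₁ := i₁₂ _ _ ((s₁ y).trans h₁) h₂
    have e₂ := i₁₃ _ _ h₁ ((s₃ y).symm.trans h₃)
    exact (hQ2 y).1 (e₁.trans e₂.symm)
  · rw [hc, hs]
    rintro _ ⟨x, rfl⟩
    refine ⟨?_, ⟨_, ⟨x, rfl⟩, rfl, s₃ x⟩, ?_⟩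
    · obtain ⟨y, rfl⟩ := τ₁.surjective x
      exact ⟨_, ⟨y, rfl⟩, (s₁ y).symm, rfl⟩
    · obtain ⟨y, rfl⟩ := τ₂.surjective x
      obtain ⟨z, rfl⟩ := τ₁.surjective y
      exact ⟨_, ⟨z, rfl⟩, (s₂ _).symm, rfl⟩
  · rw [hc, hs]
    rintro _ ⟨x, rfl⟩
    exact ⟨⟨_, ⟨τ₁ x, rfl⟩, s₁ x, rfl⟩, ⟨_, ⟨x, rfl⟩, rfl, (s₃ x).symm⟩,
      ⟨_, ⟨τ₂ (τ₁ x), rfl⟩, s₂ _, rfl⟩⟩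
  · rw [hc, ← Set.image_univ, Set.ncard_image_of_injective, Set.ncard_univ, Nat.card_eq_fintype_card]
    intro x y h
    simp only [Prod.mk.injEq] at h
    exact i₁₂ x y h.1 h.2.1
  · rw [hc, ← Set.range_comp, ← Set.ncard_coe_finset, ← range_cycleOf τ₁ fun x => (hQ2 x).1]
    rfl
  · rw [hc, ← Set.range_comp, ← Set.ncard_coe_finset, ← range_cycleOf τ₂ fun x => (hQ2 x).2.1]
    rfl
  · rw [hc, ← Set.range_comp, ← Set.ncard_coe_finset, ← range_cycleOf τ₃ fun x => (hQ2 x).2.2]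
    rfl
end

section
/- Let G be a finite group and let a, b, c be non-identity elements of G with A = ⟨a⟩, B = ⟨b⟩, C = ⟨c⟩ satisfying abc = 1 and A ∩ B = A ∩ C = B ∩ C = {1}. Then the pair (T°, T⋆), where T° = {(gA, gB, gC) : g ∈ G} and T⋆ = {(gA, gB, ga⁻¹C) : g ∈ G} are subsets of (G/A) × (G/B) × (G/C), is a latin bitrade of size |G|; it has |G:A| distinct rows (first coordinates), each row containing exactly |A| triples of T°; |G:B| distinct columns (second coordinates), each column containing exactly |B| triples of T°; and |G:C| distinct symbols (third coordinates), each symbol occurring in exactly |C| triples of T°. -/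
/-- The latin trade `T° = {(gA, gB, gC) : g ∈ G}` built from a group `G` and elements
`a`, `b`, `c`, where `A = ⟨a⟩`, `B = ⟨b⟩`, `C = ⟨c⟩` and `gH` denotes a left coset. -/
def Tcirc (G : Type*) [Group G] (a b c : G) :
    Set ((G ⧸ Subgroup.zpowers a) × (G ⧸ Subgroup.zpowers b) × (G ⧸ Subgroup.zpowers c)) :=
  {t | ∃ g : G, t = (QuotientGroup.mk g, QuotientGroup.mk g, QuotientGroup.mk g)}

/-- The disjoint mate `T⋆ = {(gA, gB, ga⁻¹C) : g ∈ G}`. -/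
def Tstar (G : Type*) [Group G] (a b c : G) :
    Set ((G ⧸ Subgroup.zpowers a) × (G ⧸ Subgroup.zpowers b) × (G ⧸ Subgroup.zpowers c)) :=
  {t | ∃ g : G, t = (QuotientGroup.mk g, QuotientGroup.mk g, QuotientGroup.mk (g * a⁻¹))}

/-- If `H` and `K` meet trivially, each left coset of `H` meets each left coset of `K` in at most
one element. -/
lemma eq_of_mk_eq_mk {G : Type*} [Group G] {H K : Subgroup G} (h : H ⊓ K = ⊥) {x y : G}
    (h₁ : (QuotientGroup.mk x : G ⧸ H) = QuotientGroup.mk y)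
    (h₂ : (QuotientGroup.mk x : G ⧸ K) = QuotientGroup.mk y) : x = y := by
  rw [QuotientGroup.eq] at h₁ h₂
  have : x⁻¹ * y ∈ H ⊓ K := ⟨h₁, h₂⟩
  rw [h, Subgroup.mem_bot] at this
  exact inv_mul_eq_one.mp this

lemma ncard_mk_fibre {G : Type*} [Group G] (H : Subgroup G) (g : G) :
    {x : G | (QuotientGroup.mk x : G ⧸ H) = QuotientGroup.mk g}.ncard = Nat.card H := by
  have : {x : G | (QuotientGroup.mk x : G ⧸ H) = QuotientGroup.mk g}
      = (fun y => g * y) '' (H : Set G) := by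
    ext x
    simp only [Set.mem_ofPred_eq, Set.mem_image, SetLike.mem_coe]
    rw [eq_comm, QuotientGroup.eq]
    exact ⟨fun hx => ⟨_, hx, by group⟩, by rintro ⟨y, hy, rfl⟩; simpa using hy⟩
  rw [this, Set.ncard_image_of_injective _ (mul_right_injective g)]
  rfl

/-- If `T` is injectively parametrised by `G` and the coordinate `p` of the triple with parameter
`g` is `gH`, then `p` takes `|G:H|` values on `T`, each of them `|H|` times. -/
lemma coord_counts {G X : Type*} [Group G] (H : Subgroup G) (φ : G → X)
    (hφ : Function.Injective φ) (p : X → G ⧸ H) (hp : ∀ g, p (φ g) = QuotientGroup.mk g)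
    (T : Set X) (hT : T = Set.range φ) :
    (p '' T).ncard = H.index ∧
      ∀ i, (∃ t ∈ T, p t = i) → {t ∈ T | p t = i}.ncard = Nat.card H := by
  subst hT
  constructor
  · have : p '' Set.range φ = Set.univ := by
      refine Set.eq_univ_of_forall fun q => ?_
      obtain ⟨g, rfl⟩ := QuotientGroup.mk_surjective q
      exact ⟨φ g, ⟨g, rfl⟩, hp g⟩
    rw [this, Set.ncard_univ]
    rfl
  · rintro _ ⟨_, ⟨g, rfl⟩, rfl⟩
    have : {t ∈ Set.range φ | p t = p (φ g)}
        = φ '' {x : G | (QuotientGroup.mk x : G ⧸ H) = QuotientGroup.mk g} := by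
      ext t
      constructor
      · rintro ⟨⟨x, rfl⟩, hx⟩
        exact ⟨x, by simpa [hp] using hx, rfl⟩
      · rintro ⟨x, hx, rfl⟩
        exact ⟨⟨x, rfl⟩, by simpa [hp] using hx⟩
    rw [this, Set.ncard_image_of_injective _ hφ, ncard_mk_fibre]

/-- Given that `T'` is a partial latin square, the exchange condition needs only existence. -/
lemma bitradeCond_of_exists {A₁ A₂ A₃ : Type*} {T T' : Set (A₁ × A₂ × A₃)} (h : IsPLS T')
    (hex : ∀ t ∈ T, (∃ t' ∈ T', t'.1 = t.1 ∧ t'.2.1 = t.2.1) ∧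
      (∃ t' ∈ T', t'.1 = t.1 ∧ t'.2.2 = t.2.2) ∧
      (∃ t' ∈ T', t'.2.1 = t.2.1 ∧ t'.2.2 = t.2.2)) : BitradeCond T T' := by
  intro t ht
  obtain ⟨⟨u, hu, u₁, u₂⟩, ⟨v, hv, v₁, v₂⟩, ⟨w, hw, w₁, w₂⟩⟩ := hex t ht
  refine ⟨⟨u, ⟨hu, u₁, u₂⟩, ?_⟩, ⟨v, ⟨hv, v₁, v₂⟩, ?_⟩, ⟨w, ⟨hw, w₁, w₂⟩, ?_⟩⟩
  · rintro y ⟨hy, y₁, y₂⟩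
    exact (h y hy u hu).1 ⟨y₁.trans u₁.symm, y₂.trans u₂.symm⟩
  · rintro y ⟨hy, y₁, y₂⟩
    exact (h y hy v hv).2.1 ⟨y₁.trans v₁.symm, y₂.trans v₂.symm⟩
  · rintro y ⟨hy, y₁, y₂⟩
    exact (h y hy w hw).2.2 ⟨y₁.trans w₁.symm, y₂.trans w₂.symm⟩

/-- Theorem (main construction): for a finite group `G` and non-identity `a b c` with
`abc = 1` and pairwise trivially intersecting `A = ⟨a⟩`, `B = ⟨b⟩`, `C = ⟨c⟩`, the pair
`(T°, T⋆)` is a latin bitrade of size `|G|` with `|G:A|` rows each of `|A|` entries,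
`|G:B|` columns each of `|B|` entries, and `|G:C|` symbols each occurring `|C|` times. -/
theorem statement2 {G : Type*} [Group G] [Finite G] (a b c : G)
    (ha : a ≠ 1) (hb : b ≠ 1) (hc : c ≠ 1)
    (habc : a * b * c = 1)
    (hAB : Subgroup.zpowers a ⊓ Subgroup.zpowers b = ⊥)
    (hAC : Subgroup.zpowers a ⊓ Subgroup.zpowers c = ⊥)
    (hBC : Subgroup.zpowers b ⊓ Subgroup.zpowers c = ⊥) :
    IsBitrade (Tcirc G a b c) (Tstar G a b c) ∧
    (Tcirc G a b c).ncard = Nat.card G ∧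
    (Prod.fst '' Tcirc G a b c).ncard = (Subgroup.zpowers a).index ∧
    (∀ i, (∃ t ∈ Tcirc G a b c, t.1 = i) →
      {t ∈ Tcirc G a b c | t.1 = i}.ncard = Nat.card ↥(Subgroup.zpowers a)) ∧
    ((fun t => t.2.1) '' Tcirc G a b c).ncard = (Subgroup.zpowers b).index ∧
    (∀ j, (∃ t ∈ Tcirc G a b c, t.2.1 = j) →
      {t ∈ Tcirc G a b c | t.2.1 = j}.ncard = Nat.card ↥(Subgroup.zpowers b)) ∧
    ((fun t => t.2.2) '' Tcirc G a b c).ncard = (Subgroup.zpowers c).index ∧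
    (∀ s, (∃ t ∈ Tcirc G a b c, t.2.2 = s) →
      {t ∈ Tcirc G a b c | t.2.2 = s}.ncard = Nat.card ↥(Subgroup.zpowers c)) := by
  -- The three reparametrisations: `gA = ga⁻¹A`, `gB = gbB` and `ga⁻¹C = gbC`.
  have eA : ∀ g : G, (QuotientGroup.mk (g * a⁻¹) : G ⧸ Subgroup.zpowers a) =
      QuotientGroup.mk g := fun g => by
    rw [QuotientGroup.eq]
    simp
  have eB : ∀ g : G, (QuotientGroup.mk (g * b) : G ⧸ Subgroup.zpowers b) =
      QuotientGroup.mk g := fun g => by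
    rw [QuotientGroup.eq]
    simp
  have hbc : a⁻¹ = b * c := by
    rw [inv_eq_iff_mul_eq_one, ← mul_assoc, habc]
  have eC : ∀ g : G, (QuotientGroup.mk (g * a⁻¹) : G ⧸ Subgroup.zpowers c) =
      QuotientGroup.mk (g * b) := fun g => by
    rw [eq_comm, QuotientGroup.eq, hbc]
    simp [mul_assoc]
  have plsCirc : IsPLS (Tcirc G a b c) := by
    rintro _ ⟨g, rfl⟩ _ ⟨h, rfl⟩
    refine ⟨fun e => ?_, fun e => ?_, fun e => ?_⟩
    · rw [eq_of_mk_eq_mk hAB e.1 e.2]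
    · rw [eq_of_mk_eq_mk hAC e.1 e.2]
    · rw [eq_of_mk_eq_mk hBC e.1 e.2]
  have plsStar : IsPLS (Tstar G a b c) := by
    rintro _ ⟨g, rfl⟩ _ ⟨h, rfl⟩
    refine ⟨fun e => ?_, fun e => ?_, fun e => ?_⟩
    · rw [eq_of_mk_eq_mk hAB e.1 e.2]
    · have : g * a⁻¹ = h * a⁻¹ :=
        eq_of_mk_eq_mk hAC ((eA g).trans (e.1.trans (eA h).symm)) e.2
      rw [mul_right_cancel this]
    · have : g * b = h * b :=
        eq_of_mk_eq_mk hBC ((eB g).trans (e.1.trans (eB h).symm))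
          ((eC g).symm.trans (e.2.trans (eC h)))
      rw [mul_right_cancel this]
  have hdisj : Disjoint (Tcirc G a b c) (Tstar G a b c) := by
    rw [Set.disjoint_left]
    rintro _ ⟨g, rfl⟩ ⟨h, e⟩
    simp only [Prod.mk.injEq] at e
    obtain ⟨e₁, e₂, e₃⟩ := e
    obtain rfl := eq_of_mk_eq_mk hAB e₁ e₂
    have : g = g * a⁻¹ := eq_of_mk_eq_mk hAC (eA g).symm e₃
    exact ha (by simpa using this)
  have hcs : BitradeCond (Tcirc G a b c) (Tstar G a b c) := by
    refine bitradeCond_of_exists plsStar ?_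
    rintro _ ⟨g, rfl⟩
    refine ⟨⟨_, ⟨g, rfl⟩, rfl, rfl⟩, ⟨_, ⟨g * a, rfl⟩, ?_, ?_⟩, ⟨_, ⟨g * b⁻¹, rfl⟩, ?_, ?_⟩⟩
    · simp
    · simp
    · simp
    · simpa using eC (g * b⁻¹)
  have hsc : BitradeCond (Tstar G a b c) (Tcirc G a b c) := by
    refine bitradeCond_of_exists plsCirc ?_
    rintro _ ⟨g, rfl⟩
    exact ⟨⟨_, ⟨g, rfl⟩, rfl, rfl⟩, ⟨_, ⟨g * a⁻¹, rfl⟩, eA g, rfl⟩,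
      ⟨_, ⟨g * b, rfl⟩, eB g, (eC g).symm⟩⟩
  let φ : G → (G ⧸ Subgroup.zpowers a) × (G ⧸ Subgroup.zpowers b) × (G ⧸ Subgroup.zpowers c) :=
    fun g => (QuotientGroup.mk g, QuotientGroup.mk g, QuotientGroup.mk g)
  have hφ : Function.Injective φ := fun g h e =>
    eq_of_mk_eq_mk hAB (congrArg Prod.fst e) (congrArg (fun t => t.2.1) e)
  have hT : Tcirc G a b c = Set.range φ := by
    ext t
    exact exists_congr fun g => eq_comm
  obtain ⟨r₁, r₂⟩ := coord_counts (Subgroup.zpowers a) φ hφ Prod.fst (fun _ => rfl) _ hT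
  obtain ⟨c₁, c₂⟩ := coord_counts (Subgroup.zpowers b) φ hφ (fun t => t.2.1) (fun _ => rfl) _ hT
  obtain ⟨s₁, s₂⟩ := coord_counts (Subgroup.zpowers c) φ hφ (fun t => t.2.2) (fun _ => rfl) _ hT
  refine ⟨⟨⟨_, 1, rfl⟩, ⟨_, 1, rfl⟩, plsCirc, plsStar, hdisj, hcs, hsc⟩, ?_,
    r₁, r₂, c₁, c₂, s₁, s₂⟩
  rw [hT, ← Set.image_univ, Set.ncard_image_of_injective _ hφ, Set.ncard_univ]
end

section
/- Let G be a finite group and let a, b, c be non-identity elements of G with A = ⟨a⟩, B = ⟨b⟩, C = ⟨c⟩ satisfying abc = 1 and A ∩ B = A ∩ C = B ∩ C = {1}. Then the set T° = {(gA, gB, gC) : g ∈ G} is equal to the set {(g₁A, g₂B, g₃C) : g₁, g₂, g₃ ∈ G, |g₁A ∩ g₂B ∩ g₃C| = 1}, which in turn is equal to the set {(g₁A, g₂B, g₃C) : g₁, g₂, g₃ ∈ G, g₁A ∩ g₂B = {g₃}}. -/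
open scoped Pointwise

theorem smul_inter_smul_eq_singleton {G : Type*} [Group G] {H K : Subgroup G}
    (h : H ⊓ K = ⊥) (g : G) : g • (H : Set G) ∩ g • (K : Set G) = {g} := by
  rw [← Set.smul_set_inter, ← Subgroup.coe_inf, h, Subgroup.coe_bot, Set.smul_set_singleton,
    smul_eq_mul, mul_one]

theorem mk_eq_of_mem_smul {G : Type*} [Group G] {H : Subgroup G} {g x : G}
    (hx : x ∈ g • (H : Set G)) : (QuotientGroup.mk g : G ⧸ H) = QuotientGroup.mk x := by
  rw [QuotientGroup.eq]
  exact Set.mem_smul_set_iff_inv_smul_mem.mp hx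

theorem self_mem_smul {G : Type*} [Group G] (H : Subgroup G) (g : G) : g ∈ g • (H : Set G) :=
  ⟨1, H.one_mem, mul_one g⟩

/-- Corollary: `T°` equals the set of triples of cosets with a common point that is the
unique point of intersection, which in turn equals the set of triples `(g₁A, g₂B, g₃C)`
with `g₁A ∩ g₂B = {g₃}`. -/
theorem statement4 {G : Type*} [Group G] [Finite G] (a b c : G)
    (ha : a ≠ 1) (hb : b ≠ 1) (hc : c ≠ 1)
    (habc : a * b * c = 1)
    (hAB : Subgroup.zpowers a ⊓ Subgroup.zpowers b = ⊥)
    (hAC : Subgroup.zpowers a ⊓ Subgroup.zpowers c = ⊥)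
    (hBC : Subgroup.zpowers b ⊓ Subgroup.zpowers c = ⊥) :
    Tcirc G a b c =
      {t | ∃ g₁ g₂ g₃ : G,
        t = (QuotientGroup.mk g₁, QuotientGroup.mk g₂, QuotientGroup.mk g₃) ∧
        (g₁ • (Subgroup.zpowers a : Set G) ∩ g₂ • (Subgroup.zpowers b : Set G) ∩
          g₃ • (Subgroup.zpowers c : Set G)).ncard = 1} ∧
    Tcirc G a b c =
      {t | ∃ g₁ g₂ g₃ : G,
        t = (QuotientGroup.mk g₁, QuotientGroup.mk g₂, QuotientGroup.mk g₃) ∧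
        g₁ • (Subgroup.zpowers a : Set G) ∩ g₂ • (Subgroup.zpowers b : Set G) = {g₃}} := by
  refine ⟨Set.ext fun t => ⟨?_, ?_⟩, Set.ext fun t => ⟨?_, ?_⟩⟩
  · rintro ⟨g, rfl⟩
    refine ⟨g, g, g, rfl, ?_⟩
    rw [smul_inter_smul_eq_singleton hAB,
      Set.inter_eq_left.mpr (Set.singleton_subset_iff.mpr (self_mem_smul _ g)),
      Set.ncard_singleton]
  · rintro ⟨g₁, g₂, g₃, rfl, h⟩
    obtain ⟨x, hx⟩ := Set.ncard_eq_one.mp h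
    obtain ⟨⟨h₁, h₂⟩, h₃⟩ := hx.symm.subset (Set.mem_singleton x)
    exact ⟨x, by rw [mk_eq_of_mem_smul h₁, mk_eq_of_mem_smul h₂, mk_eq_of_mem_smul h₃]⟩
  · rintro ⟨g, rfl⟩
    exact ⟨g, g, g, rfl, smul_inter_smul_eq_singleton hAB g⟩
  · rintro ⟨g₁, g₂, g₃, rfl, h⟩
    obtain ⟨h₁, h₂⟩ := h.symm.subset (Set.mem_singleton g₃)
    exact ⟨g₃, by rw [mk_eq_of_mem_smul h₁, mk_eq_of_mem_smul h₂]⟩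
end

section
/- Let (T°, T⋆) be a latin bitrade that is both thin and primary. Then T° is a minimal latin trade. -/
/-- A thin and primary latin bitrade has a minimal first component. -/
theorem statement6 {A₁ A₂ A₃ : Type*} (T T' : Set (A₁ × A₂ × A₃))
    (hbt : IsBitrade T T') (hthin : IsThin T T') (hprim : IsPrimary T T') :
    IsMinimalTrade T := by
  intro U U' hU hUT
  refine (hprim U U' hU hUT ?_).1
  obtain ⟨-, -, -, -, -, hTT', -⟩ := hbt
  obtain ⟨-, -, -, -, hdisj, -, hU'U⟩ := hU
  rintro ⟨i, j, k⟩ hk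
  obtain ⟨⟨⟨a, b, l⟩, ⟨hl, rfl, rfl⟩, -⟩, ⟨⟨a₁, j₁, k₁⟩, ⟨hj₁, ha₁, hk₁⟩, -⟩,
    ⟨⟨i₁, b₂, k₂⟩, ⟨hi₁, hb₂, hk₂⟩, -⟩⟩ := hU'U _ hk
  dsimp only at *
  subst a₁ k₁ b₂ k₂
  obtain ⟨⟨⟨a, b, m⟩, ⟨hm, rfl, rfl⟩, -⟩, -, -⟩ := hTT' _ (hUT hl)
  dsimp only at *
  have hne_row : a ≠ i₁ := by
    rintro rfl
    exact Set.disjoint_left.mp hdisj hi₁ hk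
  have hne_col : j₁ ≠ b := by
    rintro rfl
    exact Set.disjoint_left.mp hdisj hj₁ hk
  have hmk : m = k := hthin _ _ _ _ _ (hUT hj₁) (hUT hi₁) hne_row hne_col _ hm
  exact hmk ▸ hm
end

section
/- Let G be a finite group and let a, b, c be non-identity elements of G with A = ⟨a⟩, B = ⟨b⟩, C = ⟨c⟩ satisfying abc = 1 and A ∩ B = A ∩ C = B ∩ C = {1}, and let (T°, T⋆) be the latin bitrade with T° = {(gA, gB, gC) : g ∈ G} and T⋆ = {(gA, gB, ga⁻¹C) : g ∈ G}. Then (T°, T⋆) is thin if and only if for all integers i, j, k, the equation aⁱ bʲ cᵏ = 1 holds exactly when either i ≡ 0 (mod |A|), j ≡ 0 (mod |B|) and k ≡ 0 (mod |C|), or i ≡ 1 (mod |A|), j ≡ 1 (mod |B|) and k ≡ 1 (mod |C|). -/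
theorem eq_one_of_zpowers_inf_eq_bot {G : Type*} [Group G] {x y : G}
    (h : Subgroup.zpowers x ⊓ Subgroup.zpowers y = ⊥) {g : G}
    (hx : g ∈ Subgroup.zpowers x) (hy : g ∈ Subgroup.zpowers y) : g = 1 := by
  have hg : g ∈ Subgroup.zpowers x ⊓ Subgroup.zpowers y := ⟨hx, hy⟩
  rwa [h, Subgroup.mem_bot] at hg

theorem card_zpowers_dvd_iff {G : Type*} [Group G] (x : G) (i : ℤ) :
    (Nat.card ↥(Subgroup.zpowers x) : ℤ) ∣ i ↔ x ^ i = 1 := by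
  rw [Nat.card_zpowers, orderOf_dvd_iff_zpow_eq_one]

theorem card_zpowers_dvd_sub_one_iff {G : Type*} [Group G] (x : G) (i : ℤ) :
    (Nat.card ↥(Subgroup.zpowers x) : ℤ) ∣ (i - 1) ↔ x ^ i = x := by
  rw [card_zpowers_dvd_iff, zpow_sub_one, mul_inv_eq_one]

/-- Thinness of `(T°, T⋆)` as a condition on the solutions of `aⁱ bʲ cᵏ = 1`. -/
theorem isThin_iff {G : Type*} [Group G] {a b c : G}
    (hAC : Subgroup.zpowers a ⊓ Subgroup.zpowers c = ⊥)
    (hBC : Subgroup.zpowers b ⊓ Subgroup.zpowers c = ⊥) :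
    IsThin (Tcirc G a b c) (Tstar G a b c) ↔
      ∀ i j k : ℤ, a ^ i * b ^ j * c ^ k = 1 → c ^ k ≠ 1 → a ^ i = a := by
  constructor
  · intro h i j k he hk
    -- The configuration with `g = 1`, `f = aⁱ` and `h = aⁱ bʲ = c⁻ᵏ`.
    have hh : a ^ i * b ^ j = (c ^ k)⁻¹ := eq_inv_of_mul_eq_one_left he
    have hC : (QuotientGroup.mk (1 : G) : G ⧸ Subgroup.zpowers c)
        = QuotientGroup.mk (a ^ i * b ^ j) := by
      rw [QuotientGroup.eq, hh]
      simp
    have key := h (QuotientGroup.mk 1) (QuotientGroup.mk (a ^ i * b ^ j))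
      (QuotientGroup.mk 1) (QuotientGroup.mk (a ^ i * b ^ j)) (QuotientGroup.mk 1)
      ⟨1, rfl⟩ ⟨a ^ i * b ^ j, by rw [hC]⟩
      (by
        intro hA
        rw [QuotientGroup.eq, hh] at hA
        exact hk (eq_one_of_zpowers_inf_eq_bot hAC (by simpa using hA) (by simp)))
      (by
        intro hB
        rw [QuotientGroup.eq, hh] at hB
        exact hk (eq_one_of_zpowers_inf_eq_bot hBC (by simpa using hB) (by simp)))
      (QuotientGroup.mk (a ^ i * a⁻¹))
      ⟨a ^ i, by
        refine Prod.ext ?_ (Prod.ext ?_ rfl)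
        · exact QuotientGroup.eq.2 (by simp)
        · exact QuotientGroup.eq.2 (by simp)⟩
    have hm : a ^ i * a⁻¹ ∈ Subgroup.zpowers c := by
      simpa using QuotientGroup.eq.1 key.symm
    exact mul_inv_eq_one.1 (eq_one_of_zpowers_inf_eq_bot hAC
      (mul_mem (by simp) (by simp)) hm)
  · rintro h i i' j j' s ⟨g, hg⟩ ⟨g', hg'⟩ hi - s' ⟨f, hf⟩
    simp only [Prod.mk.injEq] at hg hg' hf
    obtain ⟨rfl, rfl, rfl⟩ := hg
    obtain ⟨rfl, rfl, hs⟩ := hg'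
    obtain ⟨hfA, hfB, rfl⟩ := hf
    obtain ⟨p, hp⟩ := QuotientGroup.eq.1 hfA
    obtain ⟨q, hq⟩ := QuotientGroup.eq.1 hfB.symm
    obtain ⟨r, hr⟩ := QuotientGroup.eq.1 hs.symm
    simp only at hp hq hr
    have ha : a ^ p = a := by
      refine h p q r (by rw [hp, hq, hr]; group) fun h1 => hi ?_
      rw [hr, inv_mul_eq_one] at h1
      rw [h1]
    have hfg : f = g * a := by
      rw [← ha, hp]
      group
    rw [hfg, mul_inv_cancel_right]

/-- The latin bitrade `(T°, T⋆)` is thin if and only if the only solutions of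
`aⁱbʲcᵏ = 1` are `(i,j,k) ≡ (0,0,0)` and `(i,j,k) ≡ (1,1,1)` modulo `(|A|,|B|,|C|)`. -/
theorem statement7 {G : Type*} [Group G] [Finite G] (a b c : G)
    (ha : a ≠ 1) (hb : b ≠ 1) (hc : c ≠ 1)
    (habc : a * b * c = 1)
    (hAB : Subgroup.zpowers a ⊓ Subgroup.zpowers b = ⊥)
    (hAC : Subgroup.zpowers a ⊓ Subgroup.zpowers c = ⊥)
    (hBC : Subgroup.zpowers b ⊓ Subgroup.zpowers c = ⊥) :
    IsThin (Tcirc G a b c) (Tstar G a b c) ↔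
      ∀ i j k : ℤ, a ^ i * b ^ j * c ^ k = 1 ↔
        (((Nat.card ↥(Subgroup.zpowers a) : ℤ) ∣ i ∧
          (Nat.card ↥(Subgroup.zpowers b) : ℤ) ∣ j ∧
          (Nat.card ↥(Subgroup.zpowers c) : ℤ) ∣ k) ∨
         ((Nat.card ↥(Subgroup.zpowers a) : ℤ) ∣ (i - 1) ∧
          (Nat.card ↥(Subgroup.zpowers b) : ℤ) ∣ (j - 1) ∧
          (Nat.card ↥(Subgroup.zpowers c) : ℤ) ∣ (k - 1))) := by
  rw [isThin_iff hAC hBC]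
  simp only [card_zpowers_dvd_sub_one_iff]
  simp only [card_zpowers_dvd_iff]
  constructor
  · intro h i j k
    constructor
    · intro he
      by_cases hk : c ^ k = 1
      · left
        rw [hk, mul_one] at he
        have hai : a ^ i = 1 := eq_one_of_zpowers_inf_eq_bot hAB (by simp)
          (by rw [eq_inv_of_mul_eq_one_left he]; simp)
        rw [hai, one_mul] at he
        exact ⟨hai, he, hk⟩
      · right
        have hai := h i j k he hk
        rw [hai, ← habc, mul_assoc, mul_assoc] at he
        have he' : b ^ j * c ^ k = b * c := mul_left_cancel he
        have hbc : b⁻¹ * b ^ j = c * (c ^ k)⁻¹ := by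
          rw [eq_mul_inv_iff_mul_eq, mul_assoc, he', inv_mul_cancel_left]
        have hbj : b⁻¹ * b ^ j = 1 := eq_one_of_zpowers_inf_eq_bot hBC
          (mul_mem (by simp) (by simp)) (by rw [hbc]; exact mul_mem (by simp) (by simp))
        have hck : c * (c ^ k)⁻¹ = 1 := hbc ▸ hbj
        exact ⟨hai, (inv_mul_eq_one.1 hbj).symm, (mul_inv_eq_one.1 hck).symm⟩
    · rintro (⟨h1, h2, h3⟩ | ⟨h1, h2, h3⟩)
      · rw [h1, h2, h3, one_mul, one_mul]
      · rw [h1, h2, h3, habc]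
  · intro h i j k he hk
    rcases (h i j k).1 he with ⟨-, -, h3⟩ | ⟨h1, -, -⟩
    · exact absurd h3 hk
    · exact h1
end

section
/- Let G be a finite group and let a, b, c be non-identity elements of G with A = ⟨a⟩, B = ⟨b⟩, C = ⟨c⟩ satisfying abc = 1 and A ∩ B = A ∩ C = B ∩ C = {1}, and let T° = {(gA, gB, gC) : g ∈ G} be the associated latin trade. Then for any k ≥ 1, T° is k-homogeneous if and only if |A| = |B| = |C| = k. -/
/-- If an injective map `f` lifts the quotient map `G → G ⧸ H` along `p`, then the part of
its range lying over a given coset of `H` has `|H|` elements. -/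
theorem ncard_fiber_eq_card {G X : Type*} [Group G] (H : Subgroup G) (f : G → X)
    (hf : Function.Injective f) (p : X → G ⧸ H) (hp : ∀ g, p (f g) = QuotientGroup.mk g) (g : G) :
    {t ∈ Set.range f | p t = QuotientGroup.mk g}.ncard = Nat.card H := by
  have hset : {t ∈ Set.range f | p t = QuotientGroup.mk g} =
      (f ∘ (g * ·)) '' (H : Set G) := by
    ext t
    constructor
    · rintro ⟨⟨x, rfl⟩, hx⟩
      rw [hp] at hx
      exact ⟨g⁻¹ * x, QuotientGroup.eq.1 hx.symm, by simp⟩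
    · rintro ⟨h, hh, rfl⟩
      refine ⟨⟨_, rfl⟩, ?_⟩
      rw [Function.comp_apply, hp]
      exact (QuotientGroup.eq.2 (by simpa using hh)).symm
  rw [hset, Set.ncard_image_of_injective _ (hf.comp (mul_right_injective g))]
  exact (Nat.card_coe_set_eq _).symm

/-- The latin trade `T°` is `k`-homogeneous if and only if `|A| = |B| = |C| = k`. -/
theorem statement8 {G : Type*} [Group G] [Finite G] (a b c : G)
    (ha : a ≠ 1) (hb : b ≠ 1) (hc : c ≠ 1)
    (habc : a * b * c = 1)
    (hAB : Subgroup.zpowers a ⊓ Subgroup.zpowers b = ⊥)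
    (hAC : Subgroup.zpowers a ⊓ Subgroup.zpowers c = ⊥)
    (hBC : Subgroup.zpowers b ⊓ Subgroup.zpowers c = ⊥) :
    ∀ k : ℕ, 1 ≤ k →
      (IsHomogeneous (Tcirc G a b c) k ↔
        (Nat.card ↥(Subgroup.zpowers a) = k ∧ Nat.card ↥(Subgroup.zpowers b) = k ∧
          Nat.card ↥(Subgroup.zpowers c) = k)) := by
  intro k _
  set f : G → (G ⧸ Subgroup.zpowers a) × (G ⧸ Subgroup.zpowers b) × (G ⧸ Subgroup.zpowers c) :=
    fun g => (QuotientGroup.mk g, QuotientGroup.mk g, QuotientGroup.mk g)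
  have hT : Tcirc G a b c = Set.range f := by
    ext t
    exact ⟨fun ⟨g, hg⟩ => ⟨g, hg.symm⟩, fun ⟨g, hg⟩ => ⟨g, hg.symm⟩⟩
  have hf : Function.Injective f := by
    intro x y hxy
    have hmem : x⁻¹ * y ∈ Subgroup.zpowers a ⊓ Subgroup.zpowers b :=
      ⟨QuotientGroup.eq.1 (congrArg (fun t => t.1) hxy),
        QuotientGroup.eq.1 (congrArg (fun t => t.2.1) hxy)⟩
    rw [hAB, Subgroup.mem_bot] at hmem
    exact inv_mul_eq_one.1 hmem
  have h1 := ncard_fiber_eq_card _ f hf (fun t => t.1) (fun _ => rfl)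
  have h2 := ncard_fiber_eq_card _ f hf (fun t => t.2.1) (fun _ => rfl)
  have h3 := ncard_fiber_eq_card _ f hf (fun t => t.2.2) (fun _ => rfl)
  rw [hT]
  constructor
  · rintro ⟨k1, k2, k3⟩
    exact ⟨(h1 1).symm.trans (k1 _ ⟨f 1, ⟨1, rfl⟩, rfl⟩),
      (h2 1).symm.trans (k2 _ ⟨f 1, ⟨1, rfl⟩, rfl⟩),
      (h3 1).symm.trans (k3 _ ⟨f 1, ⟨1, rfl⟩, rfl⟩)⟩
  · rintro ⟨k1, k2, k3⟩
    refine ⟨?_, ?_, ?_⟩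
    · rintro _ ⟨_, ⟨g, rfl⟩, rfl⟩
      exact (h1 g).trans k1
    · rintro _ ⟨_, ⟨g, rfl⟩, rfl⟩
      exact (h2 g).trans k2
    · rintro _ ⟨_, ⟨g, rfl⟩, rfl⟩
      exact (h3 g).trans k3
end

section
/- Let p be an odd prime and let G be a group of order p³ with elements a, b, c satisfying aᵖ = bᵖ = cᵖ = 1, ab = bac, ca = ac, cb = bc, c ≠ 1, and G = ⟨a, b⟩. Put γ = b⁻¹a⁻¹. Then for all integers i, j, k, the equation aⁱ bʲ γᵏ = 1 holds if and only if either i ≡ j ≡ k ≡ 0 (mod p) or i ≡ j ≡ k ≡ 1 (mod p). Consequently, the latin bitrade constructed from α = a, β = b, γ (via T° = {(g⟨α⟩, g⟨β⟩, g⟨γ⟩) : g ∈ G}, T⋆ = {(g⟨α⟩, g⟨β⟩, gα⁻¹⟨γ⟩) : g ∈ G}) is thin. -/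
section Heisenberg

variable {G : Type*} [Group G] {a b c : G}

theorem zpow_mul_zpow_heis (hab : a * b = b * a * c) (hca : Commute c a) (hcb : Commute c b)
    (x y : ℤ) : a ^ x * b ^ y = b ^ y * a ^ x * c ^ (x * y) := by
  have h1 : a * b * a⁻¹ = b * c := by
    rw [hab, mul_assoc b, ← hca.eq]; group
  have h2 : a * b ^ y * a⁻¹ = b ^ y * c ^ y := by
    rw [← conj_zpow, h1, hcb.symm.mul_zpow]
  have h3 : (b ^ y)⁻¹ * a * ((b ^ y)⁻¹)⁻¹ = a * c ^ y := by
    have h4 : a * b ^ y = b ^ y * c ^ y * a := by rw [← h2]; group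
    rw [inv_inv, mul_assoc, h4, mul_assoc, (hca.zpow_left y).eq]; group
  have h5 : (b ^ y)⁻¹ * a ^ x * ((b ^ y)⁻¹)⁻¹ = a ^ x * c ^ (x * y) := by
    rw [← conj_zpow, h3, (hca.zpow_left y).symm.mul_zpow, ← zpow_mul, mul_comm y x]
  rw [mul_assoc (b ^ y), ← h5]; group

/-- The exponent `m` is `-n(n-1)/2`, written without division. -/
theorem mul_zpow_heis (hab : a * b = b * a * c) (hca : Commute c a) (hcb : Commute c b)
    (n : ℤ) : ∃ m : ℤ, 2 * m = -(n * (n - 1)) ∧ (a * b) ^ n = a ^ n * b ^ n * c ^ m := by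
  have hcab : ∀ m : ℤ, c ^ m * (a * b) = a * b * c ^ m := fun m =>
    ((hca.mul_right hcb).zpow_left m).eq
  -- Moving `aˣ` to the left past `bʸ`.
  have hswap : ∀ x y : ℤ, b ^ y * a ^ x = a ^ x * b ^ y * c ^ (-(x * y)) := fun x y => by
    rw [zpow_mul_zpow_heis hab hca hcb x y, zpow_neg, mul_inv_cancel_right]
  have step : ∀ n m : ℤ, a ^ n * b ^ n * c ^ m * (a * b) =
      a ^ (n + 1) * b ^ (n + 1) * c ^ (m - n) := fun n m => by
    have h := hswap 1 n
    rw [one_mul, zpow_one] at h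
    calc a ^ n * b ^ n * c ^ m * (a * b) = a ^ n * (b ^ n * a) * b * c ^ m := by
          rw [mul_assoc, hcab]; group
      _ = a ^ n * a * b ^ n * (c ^ (-n) * b) * c ^ m := by rw [h]; group
      _ = a ^ (n + 1) * b ^ (n + 1) * c ^ (m - n) := by
          rw [(hcb.zpow_left (-n)).eq, sub_eq_neg_add, zpow_add c, zpow_add_one, zpow_add_one]
          group
  induction n using Int.induction_on with
  | zero => exact ⟨0, by simp, by simp⟩
  | succ n ih =>
    obtain ⟨m, hm, h⟩ := ih
    exact ⟨m - n, by linarith, by rw [zpow_add_one (a * b), h, step]⟩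
  | pred n ih =>
    obtain ⟨m, hm, h⟩ := ih
    refine ⟨m + (-n - 1), by linarith, ?_⟩
    rw [zpow_sub_one (a * b), h, mul_inv_eq_iff_eq_mul, step]
    congr 2 <;> ring_nf

/-- If `aˣ bʸ` is a power of the central element `c`, then `aˣ` commutes with `b` and `bʸ` with
`a`; the commutators `cˣ` and `cʸ` are therefore trivial. -/
theorem dvd_of_zpow_mul_zpow_eq_heis (hab : a * b = b * a * c) (hca : Commute c a)
    (hcb : Commute c b) {x y m : ℤ} (h : a ^ x * b ^ y = c ^ m) :
    (orderOf c : ℤ) ∣ x ∧ (orderOf c : ℤ) ∣ y ∧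
      (a ^ x = 1 → b ^ y = 1 → (orderOf c : ℤ) ∣ m) := by
  have hbx : Commute (a ^ x) b := by
    have : a ^ x = c ^ m * (b ^ y)⁻¹ := by rw [← h]; group
    rw [this]
    exact (hcb.zpow_left m).mul_left ((Commute.refl b).zpow_left y).inv_left
  have hay : Commute (b ^ y) a := by
    have : b ^ y = (a ^ x)⁻¹ * c ^ m := by rw [← h]; group
    rw [this]
    exact ((Commute.refl a).zpow_left x).inv_left.mul_left (hca.zpow_left m)
  have h1 := zpow_mul_zpow_heis hab hca hcb x 1
  have h2 := zpow_mul_zpow_heis hab hca hcb 1 y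
  rw [zpow_one, mul_one, hbx.eq, left_eq_mul] at h1
  rw [zpow_one, one_mul, hay.eq, left_eq_mul] at h2
  refine ⟨orderOf_dvd_iff_zpow_eq_one.2 h1, orderOf_dvd_iff_zpow_eq_one.2 h2, fun hx hy => ?_⟩
  rw [orderOf_dvd_iff_zpow_eq_one, ← h, hx, hy, one_mul]

theorem zpow_mul_zpow_mul_zpow_eq_one_iff_heis (p : ℕ) (hp : p.Prime) (hodd : Odd p)
    (hap : a ^ p = 1) (hbp : b ^ p = 1) (hcp : c ^ p = 1)
    (hab : a * b = b * a * c) (hca : Commute c a) (hcb : Commute c b) (hc : c ≠ 1)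
    (i j k : ℤ) : a ^ i * b ^ j * (b⁻¹ * a⁻¹) ^ k = 1 ↔
      (((p : ℤ) ∣ i ∧ (p : ℤ) ∣ j ∧ (p : ℤ) ∣ k) ∨
       ((p : ℤ) ∣ (i - 1) ∧ (p : ℤ) ∣ (j - 1) ∧ (p : ℤ) ∣ (k - 1))) := by
  have hord : orderOf c = p :=
    haveI := Fact.mk hp
    orderOf_eq_prime hcp hc
  have hpz : Prime (p : ℤ) := Nat.prime_iff_prime_int.1 hp
  have hp2 : ¬ (p : ℤ) ∣ 2 := fun h => by
    have h2 : p ∣ 2 := by exact_mod_cast h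
    rw [(Nat.prime_dvd_prime_iff_eq hp Nat.prime_two).1 h2] at hodd
    exact absurd hodd (by decide)
  have pow_one_of_dvd : ∀ {g : G}, g ^ p = 1 → ∀ {n : ℤ}, (p : ℤ) ∣ n → g ^ n = 1 := by
    rintro g hg n ⟨l, rfl⟩
    rw [zpow_mul, zpow_natCast, hg, one_zpow]
  obtain ⟨m, hm, hk⟩ := mul_zpow_heis hab hca hcb k
  have key : a ^ i * b ^ j * (b⁻¹ * a⁻¹) ^ k = 1 ↔ a ^ (i - k) * b ^ (j - k) = c ^ m := by
    rw [← mul_inv_rev, inv_zpow, mul_inv_eq_one, hk, mul_assoc (a ^ k),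
      ← (hcb.zpow_zpow m k).eq, zpow_sub, zpow_sub, ((Commute.refl a).zpow_zpow i k).inv_right.eq,
      mul_assoc, inv_mul_eq_iff_eq_mul, ← mul_assoc (a ^ i), mul_inv_eq_iff_eq_mul, mul_assoc]
  have hmk : (p : ℤ) ∣ m ↔ (p : ℤ) ∣ k ∨ (p : ℤ) ∣ k - 1 := by
    rw [← hpz.dvd_mul, ← dvd_neg (b := k * (k - 1)), ← hm, hpz.dvd_mul]
    simp [hp2]
  have main : a ^ i * b ^ j * (b⁻¹ * a⁻¹) ^ k = 1 ↔
      (p : ℤ) ∣ i - k ∧ (p : ℤ) ∣ j - k ∧ (p : ℤ) ∣ m := by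
    rw [key]
    constructor
    · intro h
      obtain ⟨hx, hy, hz⟩ := dvd_of_zpow_mul_zpow_eq_heis hab hca hcb h
      rw [hord] at hx hy hz
      exact ⟨hx, hy, hz (pow_one_of_dvd hap hx) (pow_one_of_dvd hbp hy)⟩
    · rintro ⟨hx, hy, hz⟩
      rw [pow_one_of_dvd hap hx, pow_one_of_dvd hbp hy, pow_one_of_dvd hcp hz, one_mul]
  rw [main, hmk]
  constructor
  · rintro ⟨hx, hy, hz | hz⟩
    · exact Or.inl ⟨(dvd_iff_dvd_of_dvd_sub hx).2 hz, (dvd_iff_dvd_of_dvd_sub hy).2 hz, hz⟩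
    · exact Or.inr ⟨by simpa using dvd_add hx hz, by simpa using dvd_add hy hz, hz⟩
  · rintro (⟨hx, hy, hz⟩ | ⟨hx, hy, hz⟩)
    · exact ⟨dvd_sub hx hz, dvd_sub hy hz, Or.inl hz⟩
    · exact ⟨by simpa using dvd_sub hx hz, by simpa using dvd_sub hy hz, Or.inr hz⟩

end Heisenberg

/-- For the nonabelian group of order `p³` and exponent `p` with `γ = b⁻¹a⁻¹`, the only
solutions of `aⁱ bʲ γᵏ = 1` are `i ≡ j ≡ k ≡ 0 (mod p)` and `i ≡ j ≡ k ≡ 1 (mod p)`;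
consequently the associated latin bitrade is thin. -/
theorem statement12 {G : Type*} [Group G] (p : ℕ) (hp : p.Prime) (hodd : Odd p)
    (hcard : Nat.card G = p ^ 3)
    (a b c : G) (hap : a ^ p = 1) (hbp : b ^ p = 1) (hcp : c ^ p = 1)
    (hab : a * b = b * a * c) (hca : c * a = a * c) (hcb : c * b = b * c)
    (hc : c ≠ 1) (hgen : Subgroup.closure {a, b} = ⊤) :
    (∀ i j k : ℤ, a ^ i * b ^ j * (b⁻¹ * a⁻¹) ^ k = 1 ↔
      (((p : ℤ) ∣ i ∧ (p : ℤ) ∣ j ∧ (p : ℤ) ∣ k) ∨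
       ((p : ℤ) ∣ (i - 1) ∧ (p : ℤ) ∣ (j - 1) ∧ (p : ℤ) ∣ (k - 1)))) ∧
    IsThin (Tcirc G a b (b⁻¹ * a⁻¹)) (Tstar G a b (b⁻¹ * a⁻¹)) := by
  have heq := zpow_mul_zpow_mul_zpow_eq_one_iff_heis p hp hodd hap hbp hcp hab hca hcb hc
  refine ⟨heq, ?_⟩
  rintro i i' j j' k ⟨g, hg⟩ ⟨g', hg'⟩ hi - k' ⟨h, hh⟩
  simp only [Prod.mk.injEq] at hg hg' hh
  obtain ⟨rfl, rfl, rfl⟩ := hg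
  obtain ⟨rfl, rfl, hγ⟩ := hg'
  obtain ⟨hα, hβ, rfl⟩ := hh
  rw [QuotientGroup.eq] at hα hβ hγ
  obtain ⟨r, hr⟩ := Subgroup.mem_zpowers_iff.1 hα
  obtain ⟨s, hs⟩ := Subgroup.mem_zpowers_iff.1 hβ
  obtain ⟨t, ht⟩ := Subgroup.mem_zpowers_iff.1 hγ
  have hrel : a ^ r * b ^ (-s) * (b⁻¹ * a⁻¹) ^ (-t) = 1 := by
    rw [zpow_neg, zpow_neg, hr, hs, ht]; group
  have ha_of : ∀ {n : ℤ}, (p : ℤ) ∣ n → a ^ n = 1 := by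
    rintro n ⟨l, rfl⟩
    rw [zpow_mul, zpow_natCast, hap, one_zpow]
  rcases (heq _ _ _).1 hrel with ⟨hr0, hs0, -⟩ | ⟨hr1, -, -⟩
  -- In the first case `h = g`, and `bˢ = 1` gives `h = g'`, against `gA ≠ g'A`.
  · have hbs : b ^ s = 1 := by
      obtain ⟨l, hl⟩ := dvd_neg.1 hs0
      rw [hl, zpow_mul, zpow_natCast, hbp, one_zpow]
    rw [ha_of hr0, eq_comm, inv_mul_eq_one] at hr
    rw [hbs, eq_comm, inv_mul_eq_one] at hs
    exact absurd (by rw [hr, hs]) hi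
  · have har : a ^ r = a := by
      rw [← sub_add_cancel r 1, zpow_add_one, ha_of hr1, one_mul]
    rw [har] at hr
    rw [show h = g * a by rw [hr]; group, mul_inv_cancel_right]
end

section
/- Let p be an odd prime and let G be a group of order p³ with elements a, b, c satisfying aᵖ = bᵖ = cᵖ = 1, ab = bac, ca = ac, cb = bc, c ≠ 1, and G = ⟨a, b⟩. Put γ = b⁻¹a⁻¹. Then ⟨γ⟩ ∩ a⁻¹⟨γ⟩a = {1}. Consequently, the latin bitrade constructed from α = a, β = b, γ (via T° = {(g⟨α⟩, g⟨β⟩, g⟨γ⟩) : g ∈ G}, T⋆ = {(g⟨α⟩, g⟨β⟩, gα⁻¹⟨γ⟩) : g ∈ G}) is orthogonal. -/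
/-- Power formula in a group of class two, for `c = [a, b]` central. -/
lemma mul_pow_heisenberg {G : Type*} [Group G] {a b c : G}
    (hab : a * b = b * a * c) (hca : Commute c a) (hcb : Commute c b) (n : ℕ) :
    (b * a) ^ n = b ^ n * a ^ n * c ^ (n.choose 2) := by
  have hpow : ∀ n : ℕ, a ^ n * b = b * a ^ n * c ^ n := by
    intro n
    have h : b⁻¹ * a * b = a * c := by rw [mul_assoc, hab]; group
    have h2 : b⁻¹ * a ^ n * b = a ^ n * c ^ n := by
      have := conj_pow (i := n) (a := b⁻¹) (b := a)
      rw [inv_inv, h, hca.symm.mul_pow] at this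
      exact this.symm
    rw [mul_assoc b, ← h2]; group
  induction n with
  | zero => simp
  | succ n ih =>
    rw [pow_succ, ih, Nat.choose_succ_succ' n 1, Nat.choose_one_right]
    have h1 : c ^ (n.choose 2) * (b * a) = b * a * c ^ (n.choose 2) :=
      ((hcb.mul_right hca).pow_left _).eq
    have h2 : c ^ n * a = a * c ^ n := (hca.pow_left n).eq
    calc b ^ n * a ^ n * c ^ n.choose 2 * (b * a)
        = b ^ n * (a ^ n * b) * a * c ^ n.choose 2 := by
          rw [mul_assoc _ (c ^ _), h1]; simp only [mul_assoc]
      _ = b ^ n * b * a ^ n * (c ^ n * a) * c ^ n.choose 2 := by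
          rw [hpow]; simp only [mul_assoc]
      _ = b ^ (n + 1) * a ^ (n + 1) * c ^ (n + n.choose 2) := by
          rw [h2, pow_succ, pow_succ, pow_add]; simp only [mul_assoc]

lemma gamma_pow_prime {G : Type*} [Group G] {p : ℕ} (hodd : Odd p) {a b c : G}
    (hap : a ^ p = 1) (hbp : b ^ p = 1) (hcp : c ^ p = 1)
    (hab : a * b = b * a * c) (hca : Commute c a) (hcb : Commute c b) :
    (b⁻¹ * a⁻¹) ^ p = 1 := by
  have hch : c ^ p.choose 2 = 1 := by
    obtain ⟨k, rfl⟩ := hodd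
    have : (2 * k + 1).choose 2 = (2 * k + 1) * k := by
      rw [Nat.choose_two_right, Nat.add_sub_cancel, mul_left_comm]
      exact Nat.mul_div_cancel_left _ two_pos
    rw [this, pow_mul, hcp, one_pow]
  have h1 : (b * a) ^ p = 1 := by
    rw [mul_pow_heisenberg hab hca hcb, hap, hbp, hch]; simp
  have h2 : b⁻¹ * a⁻¹ = a * (b * a)⁻¹ * a⁻¹ := by group
  rw [h2, conj_pow, inv_pow, h1]; simp

lemma conj_gamma_zpow {G : Type*} [Group G] {a b c : G}
    (hab : a * b = b * a * c) (hca : Commute c a) (hcb : Commute c b) (j : ℤ) :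
    a⁻¹ * (b⁻¹ * a⁻¹) ^ j * a = (b⁻¹ * a⁻¹) ^ j * c ^ j := by
  have hg : Commute (b⁻¹ * a⁻¹) c := (hcb.inv_right.mul_right hca.inv_right).symm
  have h : a⁻¹ * (b⁻¹ * a⁻¹) * a = (b⁻¹ * a⁻¹) * c := by
    have h3 : b⁻¹ * a⁻¹ = a⁻¹ * b⁻¹ * c⁻¹ := by
      rw [← mul_inv_rev, hab, mul_inv_rev, mul_inv_rev]
      exact (hca.inv_inv.mul_right hcb.inv_inv).eq
    rw [h3]
    have h4 : a⁻¹ * (a⁻¹ * b⁻¹ * c⁻¹) * a = a⁻¹ * (b⁻¹ * a⁻¹) * a := by rw [h3]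
    rw [h4]; group
  have := conj_zpow (i := j) (a := a⁻¹) (b := b⁻¹ * a⁻¹)
  rw [inv_inv, h, hg.mul_zpow] at this
  exact this.symm

/-- `⟨γ⟩ ∩ a⁻¹⟨γ⟩a = {1}`, in terms of elements. -/
lemma inf_conj_trivial {G : Type*} [Group G] {p : ℕ} (hp : p.Prime) (hodd : Odd p) {a b c : G}
    (hap : a ^ p = 1) (hbp : b ^ p = 1) (hcp : c ^ p = 1)
    (hab : a * b = b * a * c) (hca : Commute c a) (hcb : Commute c b) (hc : c ≠ 1)
    {i j : ℤ} (h : (b⁻¹ * a⁻¹) ^ i = a⁻¹ * (b⁻¹ * a⁻¹) ^ j * a) :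
    (b⁻¹ * a⁻¹) ^ i = 1 := by
  have hord : orderOf c = p := by
    have := Fact.mk hp
    exact orderOf_eq_prime hcp hc
  have hγ := gamma_pow_prime hodd hap hbp hcp hab hca hcb
  have hkill : ∀ m : ℤ, c ^ m = 1 → (b⁻¹ * a⁻¹) ^ m = 1 := by
    intro m hm
    rw [← orderOf_dvd_iff_zpow_eq_one, hord] at hm
    obtain ⟨k, rfl⟩ := hm
    rw [zpow_mul, zpow_natCast, hγ, one_zpow]
  rw [conj_gamma_zpow hab hca hcb] at h
  have hm : (b⁻¹ * a⁻¹) ^ (i - j) = c ^ j := by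
    rw [sub_eq_neg_add, zpow_add, h, zpow_neg, inv_mul_cancel_left]
  have hcm : c ^ (i - j) = 1 := by
    have h1 := conj_gamma_zpow hab hca hcb (i - j)
    rw [hm, mul_assoc, (hca.zpow_left j).eq, inv_mul_cancel_left] at h1
    exact left_eq_mul.mp h1
  have hcj : c ^ j = 1 := by rw [← hm, hkill _ hcm]
  rw [h, hcj, hkill _ hcj, one_mul]

/-- `⟨a⟩ ∩ ⟨b⟩ = {1}`: an element of the intersection commutes with `b`, while
`b⁻¹ * a ^ s * b = a ^ s * c ^ s`. -/
lemma zpowers_inter_trivial {G : Type*} [Group G] {p : ℕ} (hp : p.Prime) {a b c : G}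
    (hap : a ^ p = 1) (hcp : c ^ p = 1)
    (hab : a * b = b * a * c) (hca : Commute c a) (hc : c ≠ 1) {x : G}
    (hxa : x ∈ Subgroup.zpowers a) (hxb : x ∈ Subgroup.zpowers b) : x = 1 := by
  have hord : orderOf c = p := by
    have := Fact.mk hp
    exact orderOf_eq_prime hcp hc
  obtain ⟨s, rfl⟩ := Subgroup.mem_zpowers_iff.mp hxa
  obtain ⟨t, ht⟩ := Subgroup.mem_zpowers_iff.mp hxb
  have h : b⁻¹ * a * b = a * c := by rw [mul_assoc, hab]; group
  have h2 : a ^ s * c ^ s = b⁻¹ * a ^ s * b := by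
    have := conj_zpow (i := s) (a := b⁻¹) (b := a)
    rw [inv_inv, h, hca.symm.mul_zpow] at this
    exact this
  have h3 : b⁻¹ * a ^ s * b = a ^ s := by rw [← ht]; group
  rw [h3, mul_eq_left, ← orderOf_dvd_iff_zpow_eq_one, hord] at h2
  obtain ⟨k, rfl⟩ := h2
  rw [zpow_mul, zpow_natCast, hap, one_zpow]

/-- For the nonabelian group of order `p³` and exponent `p` with `γ = b⁻¹a⁻¹`, we have
`⟨γ⟩ ∩ a⁻¹⟨γ⟩a = {1}`; consequently the associated latin bitrade is orthogonal. -/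
theorem statement13 {G : Type*} [Group G] (p : ℕ) (hp : p.Prime) (hodd : Odd p)
    (hcard : Nat.card G = p ^ 3)
    (a b c : G) (hap : a ^ p = 1) (hbp : b ^ p = 1) (hcp : c ^ p = 1)
    (hab : a * b = b * a * c) (hca : c * a = a * c) (hcb : c * b = b * c)
    (hc : c ≠ 1) (hgen : Subgroup.closure {a, b} = ⊤) :
    Subgroup.zpowers (b⁻¹ * a⁻¹) ⊓
      (Subgroup.zpowers (b⁻¹ * a⁻¹)).map (MulAut.conj a⁻¹).toMonoidHom = ⊥ ∧
    IsOrthogonal (Tcirc G a b (b⁻¹ * a⁻¹)) (Tstar G a b (b⁻¹ * a⁻¹)) := by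
  have hca' : Commute c a := hca
  have hcb' : Commute c b := hcb
  have key : ∀ x ∈ Subgroup.zpowers (b⁻¹ * a⁻¹),
      a * x * a⁻¹ ∈ Subgroup.zpowers (b⁻¹ * a⁻¹) → x = 1 := by
    intro x hx hy
    obtain ⟨i, rfl⟩ := Subgroup.mem_zpowers_iff.mp hx
    obtain ⟨j, hj⟩ := Subgroup.mem_zpowers_iff.mp hy
    refine inf_conj_trivial hp hodd hap hbp hcp hab hca' hcb' hc (j := j) ?_
    rw [hj]; simp only [mul_assoc, inv_mul_cancel_left, inv_mul_cancel, mul_one]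
  refine ⟨?_, ?_⟩
  · rw [eq_bot_iff]
    rintro x ⟨hx, y, hy, hxy⟩
    have hy' : y = a * x * a⁻¹ := by
      rw [← hxy]
      simp [mul_assoc]
    exact Subgroup.mem_bot.mpr (key x hx (hy' ▸ hy))
  -- The cell `(gA, gB)` determines `g`.
  · have cell : ∀ g h : G, (QuotientGroup.mk g : G ⧸ Subgroup.zpowers a) = QuotientGroup.mk h →
        (QuotientGroup.mk g : G ⧸ Subgroup.zpowers b) = QuotientGroup.mk h → g = h := by
      intro g h h1 h2
      exact inv_mul_eq_one.mp (zpowers_inter_trivial hp hap hcp hab hca' hc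
        (QuotientGroup.eq.mp h1) (QuotientGroup.eq.mp h2))
    rintro i i' j j' k ⟨g, hg⟩ ⟨h, hh⟩ hi - k₁ k₂ ⟨g', hg'⟩ ⟨h', hh'⟩ hk
    simp only [Prod.mk.injEq] at hg hh hg' hh'
    obtain rfl := cell g g' (hg.1.symm.trans hg'.1) (hg.2.1.symm.trans hg'.2.1)
    obtain rfl := cell h h' (hh.1.symm.trans hh'.1) (hh.2.1.symm.trans hh'.2.1)
    have e1 := QuotientGroup.eq.mp (hg.2.2.symm.trans hh.2.2)
    have e2 := QuotientGroup.eq.mp ((hg'.2.2.symm.trans hk).trans hh'.2.2)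
    have e3 : (g * a⁻¹)⁻¹ * (h * a⁻¹) = a * (g⁻¹ * h) * a⁻¹ := by group
    rw [e3] at e2
    have hgh : g = h := inv_mul_eq_one.mp (key _ e1 e2)
    exact hi (by rw [hg.1, hh.1, hgh])
end

section
/- Let p and q be primes with p > q > 2 and q dividing p − 1, let r be an integer with r^q ≡ 1 (mod p) and r ≢ 1 (mod p), and let G be a group of order pq generated by a, b where a has order p, b has order q and b⁻¹ab = a^r. Put α = b and γ = b⁻¹a⁻¹b⁻¹. Then ⟨γ⟩ ∩ α⁻¹⟨γ⟩α = {1}. Consequently, the latin bitrade constructed from α = b, β = ab, γ (via T° = {(g⟨α⟩, g⟨β⟩, g⟨γ⟩) : g ∈ G}, T⋆ = {(g⟨α⟩, g⟨β⟩, gα⁻¹⟨γ⟩) : g ∈ G}) is orthogonal. -/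
/-- A nontrivial power of an element of prime order generates the same subgroup, so it has the
same centralizer. -/
lemma commute_of_commute_zpow {G : Type*} [Group G] {q : ℕ} (hq : q.Prime) {x c : G} {j : ℤ}
    (hx : x ^ q = 1) (hj : x ^ j ≠ 1) (h : Commute (x ^ j) c) : Commute x c := by
  have hnd : ¬ (q : ℤ) ∣ j := by
    rintro ⟨k, rfl⟩
    apply hj
    rw [zpow_mul, zpow_natCast, hx, one_zpow]
  obtain ⟨u, v, huv⟩ := (Nat.prime_iff_prime_int.mp hq).coprime_iff_not_dvd.mpr hnd
  have hxv : (x ^ j) ^ v = x := by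
    calc (x ^ j) ^ v = x ^ (u * q + v * j) := by
          rw [zpow_add, mul_comm u, zpow_mul, zpow_natCast, hx, one_zpow, one_mul, mul_comm v,
            zpow_mul]
      _ = x := by rw [huv, zpow_one]
  rw [← hxv]
  exact h.zpow_left v

/-- If `⟨α⟩ ∩ ⟨β⟩` and `⟨γ⟩ ∩ α⁻¹⟨γ⟩α` are trivial, the pair built from `α, β, γ` is
orthogonal. -/
lemma isOrthogonal_of_trivial_inter {G : Type*} [Group G] {α β γ : G}
    (hαβ : ∀ x ∈ Subgroup.zpowers α, x ∈ Subgroup.zpowers β → x = 1)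
    (hγ : ∀ x ∈ Subgroup.zpowers γ, α * x * α⁻¹ ∈ Subgroup.zpowers γ → x = 1) :
    IsOrthogonal (Tcirc G α β γ) (Tstar G α β γ) := by
  rintro i i' j j' k ⟨g, hg⟩ ⟨h, hh⟩ hi _ k₁ k₂ ⟨g', hg'⟩ ⟨h', hh'⟩ rfl
  simp only [Prod.mk.injEq] at hg hh hg' hh'
  obtain ⟨rfl, rfl, rfl⟩ := hg
  obtain ⟨rfl, rfl, hgh⟩ := hh
  obtain ⟨hA, hB, rfl⟩ := hg'
  obtain ⟨hA', hB', hk⟩ := hh'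
  rw [QuotientGroup.eq] at hA hB hA' hB' hgh hk
  obtain rfl := inv_mul_eq_one.mp (hαβ _ hA hB)
  obtain rfl := inv_mul_eq_one.mp (hαβ _ hA' hB')
  apply hi
  rw [inv_mul_eq_one.mp (hγ _ hgh (by simpa [mul_assoc] using hk))]

/-- For the nonabelian group of order `pq` with `α = b`, `γ = b⁻¹a⁻¹b⁻¹`, we have
`⟨γ⟩ ∩ α⁻¹⟨γ⟩α = {1}`; consequently the associated latin bitrade is orthogonal. -/
theorem statement15 {G : Type*} [Group G] (p q : ℕ) (hp : p.Prime) (hq : q.Prime)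
    (hqp : q < p) (h2q : 2 < q) (hdvd : q ∣ p - 1)
    (r : ℤ) (hr1 : r ^ q ≡ 1 [ZMOD (p : ℤ)]) (hr2 : ¬ r ≡ 1 [ZMOD (p : ℤ)])
    (hcard : Nat.card G = p * q)
    (a b : G) (hoa : orderOf a = p) (hob : orderOf b = q)
    (hrel : b⁻¹ * a * b = a ^ r)
    (hgen : Subgroup.closure {a, b} = ⊤) :
    Subgroup.zpowers (b⁻¹ * a⁻¹ * b⁻¹) ⊓
      (Subgroup.zpowers (b⁻¹ * a⁻¹ * b⁻¹)).map (MulAut.conj b⁻¹).toMonoidHom = ⊥ ∧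
    IsOrthogonal (Tcirc G b (a * b) (b⁻¹ * a⁻¹ * b⁻¹))
      (Tstar G b (a * b) (b⁻¹ * a⁻¹ * b⁻¹)) := by
  have hqZ : Prime (q : ℤ) := Nat.prime_iff_prime_int.mp hq
  have hap : a ^ p = 1 := hoa ▸ pow_orderOf_eq_one a
  have hbq : b ^ q = 1 := hob ▸ pow_orderOf_eq_one b
  have hab : ¬ Commute b a := by
    intro h
    apply hr2
    have h1 : a ^ r = a ^ (1 : ℤ) := by
      rw [← hrel, zpow_one, mul_assoc, ← h.eq, inv_mul_cancel_left]
    rw [zpow_eq_zpow_iff_modEq, hoa] at h1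
    exact h1
  have hN : (Subgroup.zpowers a).Normal := by
    apply Subgroup.normal_of_index_eq_minFac_card
    have hidx := (Subgroup.zpowers a).card_mul_index
    rw [Nat.card_zpowers, hoa, hcard] at hidx
    rw [Nat.eq_of_mul_eq_mul_left hp.pos hidx, hcard]
    apply le_antisymm
    · have hm := Nat.minFac_prime (n := p * q) (by
        have := Nat.mul_le_mul hp.two_le hq.two_le
        omega)
      rcases (Nat.Prime.dvd_mul hm).mp (Nat.minFac_dvd (p * q)) with h | h
      · rw [(Nat.prime_dvd_prime_iff_eq hm hp).mp h]
        exact hqp.le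
      · rw [(Nat.prime_dvd_prime_iff_eq hm hq).mp h]
    · exact Nat.minFac_le_of_dvd hq.two_le (dvd_mul_left q p)
  let φ : G →* G ⧸ Subgroup.zpowers a := QuotientGroup.mk' (Subgroup.zpowers a)
  have hφ : ∀ x : G, φ x = 1 ↔ x ∈ Subgroup.zpowers a := fun x => QuotientGroup.eq_one_iff x
  have hφa : φ a = 1 := (hφ a).mpr (Subgroup.mem_zpowers a)
  have hφb : orderOf (φ b) = q := by
    have := Fact.mk hq
    apply orderOf_eq_prime
    · rw [← map_pow, hbq, map_one]
    · intro h
      obtain ⟨k, hk⟩ := Subgroup.mem_zpowers_iff.mp ((hφ b).mp h)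
      exact hab (hk ▸ (Commute.refl a).zpow_left k)
  have hφz : ∀ k : ℤ, φ b ^ k = 1 → (q : ℤ) ∣ k := by
    intro k hk
    rw [← hφb]
    exact orderOf_dvd_iff_zpow_eq_one.mpr hk
  have h2 : ¬ (q : ℤ) ∣ 2 := by
    intro h
    have := Int.le_of_dvd (by norm_num) h
    omega
  have hb2 : b ^ (2 : ℤ) ≠ 1 := by
    intro h
    exact h2 (hφz 2 (by rw [← map_zpow, h, map_one]))
  obtain ⟨c, hc⟩ : ∃ c, c = b⁻¹ * a⁻¹ * b⁻¹ := ⟨_, rfl⟩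
  rw [← hc]
  have hφc : φ c = φ b ^ (-2 : ℤ) := by
    rw [hc]
    simp only [map_mul, map_inv, hφa]
    group
  have hcb : ¬ Commute c b := by
    intro h
    have ha : a = (b * c * b)⁻¹ := by rw [hc]; group
    apply hab
    rw [ha]
    exact (((Commute.refl b).mul_right h.symm).mul_right (Commute.refl b)).inv_right
  have hca : ¬ Commute a c := by
    intro h
    apply hab
    apply commute_of_commute_zpow hq hbq hb2
    -- `γ⁻¹ = b * a * b = b ^ 2 * a ^ r`, so `b ^ 2 = γ⁻¹ * a ^ (-r)`.
    have hb : b ^ (2 : ℤ) = c⁻¹ * (a ^ r)⁻¹ := by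
      rw [← hrel, hc, zpow_two]
      group
    rw [hb]
    exact (h.symm.inv_left).mul_left ((Commute.refl a).zpow_left r).inv_left
  have hcq : c ^ q = 1 := by
    by_contra hne
    have hmem : c ^ q ∈ Subgroup.zpowers a := by
      rw [← hφ, map_pow, hφc, ← zpow_natCast, ← zpow_mul, mul_comm, zpow_mul, zpow_natCast,
        ← map_pow, hbq, map_one, one_zpow]
    obtain ⟨m, hm⟩ := Subgroup.mem_zpowers_iff.mp hmem
    apply hca
    apply commute_of_commute_zpow hp hap (j := m)
    · rw [hm]
      exact hne
    · rw [hm]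
      exact (Commute.refl c).pow_left q
  have hγ : ∀ x ∈ Subgroup.zpowers c, b * x * b⁻¹ ∈ Subgroup.zpowers c → x = 1 := by
    intro x hx hy
    obtain ⟨i, rfl⟩ := Subgroup.mem_zpowers_iff.mp hx
    obtain ⟨j, hj⟩ := Subgroup.mem_zpowers_iff.mp hy
    have hd : (q : ℤ) ∣ j - i := by
      have h := congrArg φ hj
      simp only [map_mul, map_inv, map_zpow, hφc, ← zpow_mul] at h
      have h' : φ b ^ (-2 * j) = φ b ^ (-2 * i) := by
        rw [h, ((Commute.refl (φ b)).zpow_right _).eq, mul_inv_cancel_right]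
      have h3 := hφz (-2 * j - -2 * i) (by rw [zpow_sub, h', mul_inv_cancel])
      have h4 : (q : ℤ) ∣ 2 * (j - i) := by
        have h5 : 2 * (j - i) = -(-2 * j - -2 * i) := by ring
        rw [h5]
        exact (dvd_neg (a := (q : ℤ))).mpr h3
      exact (hqZ.dvd_or_dvd h4).resolve_left h2
    have hji : c ^ j = c ^ i := by
      obtain ⟨k, hk⟩ := hd
      rw [← mul_inv_eq_one, ← zpow_sub, hk, zpow_mul, zpow_natCast, hcq, one_zpow]
    by_contra hne
    apply hcb
    apply commute_of_commute_zpow hq hcq hne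
    rw [hji] at hj
    exact eq_mul_inv_iff_mul_eq.mp hj
  have hαβ : ∀ x ∈ Subgroup.zpowers b, x ∈ Subgroup.zpowers (a * b) → x = 1 := by
    intro x hx hy
    obtain ⟨i, rfl⟩ := Subgroup.mem_zpowers_iff.mp hx
    obtain ⟨j, hj⟩ := Subgroup.mem_zpowers_iff.mp hy
    by_contra hne
    apply hab
    have h : Commute b (a * b) := by
      apply commute_of_commute_zpow hq hbq hne
      rw [← hj]
      exact (Commute.refl _).zpow_left j
    have h' := h.mul_right (Commute.refl b).inv_right
    rwa [mul_inv_cancel_right] at h'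
  refine ⟨?_, isOrthogonal_of_trivial_inter hαβ hγ⟩
  rw [eq_bot_iff]
  rintro x ⟨hx, y, hy, hyx⟩
  apply hγ x hx
  have : b * x * b⁻¹ = y := by
    rw [← hyx]
    simp [mul_assoc]
  rw [this]
  exact hy
end
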